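/- arXiv:2204.07033 — 2 statements merged into one kernel-verified Lean document; each statement's English description precedes it below -/
import Mathlib

section
/- The space T is not locally connected: the point r = (0, -1) of T has a neighborhood in T that contains no connected neighborhood of r. -/
open Real Set

/-- The deleted topologist's sine curve `T`. -/
def T : Set (ℝ × ℝ) :=
  {p : ℝ × ℝ | (0 < p.1 ∧ p.1 ≤ 1 ∧ p.2 = Real.sin (1 / p.1)) ∨
    (p.1 = 0 ∧ -1 ≤ p.2 ∧ p.2 < 0)}

def r : ℝ × ℝ := (0, -1)

lemma r_mem_T : r ∈ T := Or.inr ⟨rfl, le_refl _, by norm_num [r]⟩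

/-!
Points of the curve with any prescribed height in `[-1, 1]` accumulate at `x = 0`. Hence every
neighborhood of a point of the segment `x = 0` contains a point with some abscissa `a > 0`. A
connected such neighborhood has points over every `x ∈ [0, a]`, so it contains the whole curve over
`(0, a]`, in particular points of height `1`, and is not contained in the half-plane `y < 0`.
-/

open Filter Topology

lemma frequently_atTop_eq_of_periodic {G α : Type*} [AddCommGroup G] [LinearOrder G]
    [IsOrderedAddMonoid G] [Archimedean G] {f : G → α} {c : G} (hf : Function.Periodic f c)
    (hc : 0 < c) (a : G) : ∃ᶠ x in atTop, f x = f a :=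
  frequently_atTop.2 fun b ↦
    let ⟨x, hx, hfx⟩ := hf.exists_mem_Ico hc a b
    ⟨x, hx.1, hfx.symm⟩

lemma frequently_sin_one_div_eq {y : ℝ} (hy : y ∈ Icc (-1) 1) :
    ∃ᶠ x in 𝓝[>] (0 : ℝ), sin (1 / x) = y := by
  have sin_frequently : ∃ᶠ t in atTop, sin t = y := by
    simpa only [sin_arcsin hy.1 hy.2] using
      frequently_atTop_eq_of_periodic sin_periodic two_pi_pos (arcsin y)
  refine tendsto_inv_atTop_nhdsGT_zero.frequently (sin_frequently.mono fun t ht ↦ ?_)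
  rwa [one_div, inv_inv]

lemma snd_eq_sin_of_mem_T {p : ℝ × ℝ} (hp : p ∈ T) (hpos : 0 < p.1) : p.2 = sin (1 / p.1) := by
  obtain ⟨-, -, h⟩ | ⟨h, -⟩ := hp
  · exact h
  · exact absurd h hpos.ne'

lemma snd_mem_Ico_of_mem_T {p : ℝ × ℝ} (hp : p ∈ T) (hzero : p.1 = 0) : p.2 ∈ Ico (-1) 0 := by
  obtain ⟨h, -⟩ | ⟨-, h⟩ := hp
  · exact absurd hzero h.ne'
  · exact h

lemma dense_fst_pos : Dense {p : T | 0 < p.1.1} := by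
  intro p
  obtain hpos | hzero : 0 < p.1.1 ∨ p.1.1 = 0 := p.2.imp And.left And.left
  · exact subset_closure hpos
  have tendsto_horizontal : Tendsto (fun x : ℝ ↦ (x, p.1.2)) (𝓝[>] 0) (𝓝 p.1) :=
    tendsto_nhdsWithin_of_tendsto_nhds <|
      (Continuous.prodMk_left p.1.2).tendsto' 0 p.1 (Prod.ext hzero.symm rfl)
  rw [mem_closure_iff_nhds]
  intro W hW
  obtain ⟨V, hV, hVW⟩ := (mem_nhds_subtype T p W).1 hW
  obtain ⟨hy_ge, hy_neg⟩ := snd_mem_Ico_of_mem_T p.2 hzero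
  have sin_frequently := frequently_sin_one_div_eq ⟨hy_ge, hy_neg.le.trans zero_le_one⟩
  obtain ⟨a, hsin, haV, ha_pos, ha_le⟩ := (sin_frequently.and_eventually
    ((tendsto_horizontal.eventually hV).and (Ioc_mem_nhdsGT zero_lt_one))).exists
  exact ⟨⟨(a, p.1.2), Or.inl ⟨ha_pos, ha_le, hsin.symm⟩⟩, hVW haV, ha_pos⟩

lemma Icc_subset_snd_image_of_isPreconnected {p : T} (hp : p.1.1 = 0) {W : Set T}
    (hW : W ∈ 𝓝 p) (hconn : IsPreconnected W) : Icc (-1) 1 ⊆ (fun q : T ↦ q.1.2) '' W := by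
  intro y hy
  obtain ⟨q, hqW, hq_pos⟩ := mem_closure_iff_nhds.1 (dense_fst_pos p) W hW
  have Icc_subset_fst_image : Icc 0 q.1.1 ⊆ (fun q : T ↦ q.1.1) '' W :=
    (hconn.image _ (by fun_prop)).Icc_subset ⟨p, mem_of_mem_nhds hW, hp⟩ ⟨q, hqW, rfl⟩
  obtain ⟨x, hsin, hx⟩ :=
    ((frequently_sin_one_div_eq hy).and_eventually (Ioc_mem_nhdsGT hq_pos)).exists
  obtain ⟨s, hsW, rfl⟩ := Icc_subset_fst_image (Ioc_subset_Icc_self hx)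
  exact ⟨s, hsW, (snd_eq_sin_of_mem_T s.2 hx.1).trans hsin⟩

theorem stmt_4_general {p : T} (hp : p.1.1 = 0) :
    ∃ U ∈ 𝓝 p, ¬ ∃ W ∈ 𝓝 p, W ⊆ U ∧ IsConnected W := by
  have lower_open : IsOpen {q : T | q.1.2 < 0} := isOpen_lt (by fun_prop) continuous_const
  refine ⟨{q : T | q.1.2 < 0}, lower_open.mem_nhds (snd_mem_Ico_of_mem_T p.2 hp).2, ?_⟩
  rintro ⟨W, hW, hWU, hconn⟩
  obtain ⟨q, hqW, (hq_one : q.1.2 = 1)⟩ :=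
    Icc_subset_snd_image_of_isPreconnected hp hW hconn.isPreconnected
      (right_mem_Icc.2 (by norm_num : (-1 : ℝ) ≤ 1))
  have hq_neg : q.1.2 < 0 := hWU hqW
  linarith

/-- `T` is not locally connected at `r = (0,-1)`: some neighborhood of `r` in `T`
contains no connected neighborhood of `r`. -/
theorem stmt_4 : ∃ U ∈ nhds (⟨r, r_mem_T⟩ : T),
    ¬ ∃ W ∈ nhds (⟨r, r_mem_T⟩ : T), W ⊆ U ∧ IsConnected W :=
  stmt_4_general rfl
end

section
/- Let p be a prime. For every integer i ≥ 1, the set of locally constant functions from V_i to ZMod p (the field with p elements, as a discrete space) is countable. -/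
open Real Set

noncomputable def s : ℝ × ℝ := (1, Real.sin 1)

def V : Set (ℝ × ℝ) := T ∩ {p : ℝ × ℝ | p.2 < 0}

def Vi (i : ℕ) : Set (ℝ × ℝ) := V ∪ (T ∩ {p : ℝ × ℝ | p.1 > 1 / (i : ℝ)})

lemma r_mem_Vi (i : ℕ) : r ∈ Vi i := Or.inl ⟨r_mem_T, by norm_num [r]⟩

lemma s_mem_T : s ∈ T := Or.inl ⟨one_pos, le_refl _, by norm_num [s]⟩

lemma s_mem_Vi {i : ℕ} (hi : 2 ≤ i) : s ∈ Vi i := by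
  refine Or.inr ⟨s_mem_T, ?_⟩
  have h2 : (1 : ℝ) < i := by exact_mod_cast lt_of_lt_of_le one_lt_two (by exact_mod_cast hi)
  show (1 : ℝ) / (i : ℝ) < s.1
  rw [show s.1 = 1 from rfl, div_lt_one (by linarith)]
  exact h2

lemma Vi_mono {i j : ℕ} (hi : 1 ≤ i) (hij : i ≤ j) : Vi i ⊆ Vi j := by
  apply Set.union_subset_union_right
  apply Set.inter_subset_inter_right
  intro p hp
  have hi' : (0 : ℝ) < i := by exact_mod_cast hi
  have hij' : (i : ℝ) ≤ j := by exact_mod_cast hij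
  exact lt_of_le_of_lt (one_div_le_one_div_of_le hi' hij') hp

/-!
A locally constant function is constant on connected components, so it is determined by its
restriction to any compact set `K` meeting every component. When `K` is second countable and `Z` is
countable and discrete, `C(K, Z)` is both second countable and discrete, hence countable.

The components of `V` are the segment `{0} × [-1, 0)` and the arcs of the sine curve below the
`x`-axis. The lowest points of these arcs converge to `(0, -1)`, which lies in the segment, so
together they form a compact set meeting every component. The remaining part of `V_i` is a
connected piece of the curve, which needs at most one further point.
-/

section CompactTransversal

variable {X Z : Type*} [TopologicalSpace X]

theorem discreteTopology_continuousMap [CompactSpace X] [TopologicalSpace Z] [DiscreteTopology Z] :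
    DiscreteTopology C(X, Z) := by
  refine discreteTopology_iff_isOpen_singleton.2 fun f ↦ ?_
  have finite_range : (range f).Finite := isCompact_iff_finite.1 (isCompact_range f.continuous)
  have singleton_eq : {f} = ⋂ z ∈ range f, {g : C(X, Z) | MapsTo g (f ⁻¹' {z}) {z}} := by
    ext g
    simp only [mem_singleton_iff, mem_iInter, forall_mem_range, mem_ofPred_eq]
    exact ⟨fun hg x y hy ↦ by rwa [hg], fun hg ↦ ContinuousMap.ext fun x ↦ hg x rfl⟩
  rw [singleton_eq]
  exact finite_range.isOpen_biInter fun z _ ↦ ContinuousMap.isOpen_setOfPred_mapsTo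
    ((isClosed_discrete {z}).preimage f.continuous).isCompact (isOpen_discrete {z})

theorem countable_locallyConstant_of_compactSpace [CompactSpace X] [LocallyCompactSpace X]
    [SecondCountableTopology X] [Countable Z] : Countable (LocallyConstant X Z) := by
  let : TopologicalSpace Z := ⊥
  have : DiscreteTopology Z := ⟨rfl⟩
  have : DiscreteTopology C(X, Z) := discreteTopology_continuousMap
  have : Countable C(X, Z) := TopologicalSpace.separableSpace_iff_countable.1 inferInstance
  exact LocallyConstant.toContinuousMap_injective.countable

/-- A set has a compact transversal if some compact subset of it meets each of its connected
components, possibly in several points. Locally constant functions on the set are then determined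
by their values on that compact subset. -/
def HasCompactTransversal (S : Set X) : Prop :=
  ∃ K ⊆ S, IsCompact K ∧ ∀ x ∈ S, (connectedComponentIn S x ∩ K).Nonempty

namespace HasCompactTransversal

variable {S S₁ S₂ K : Set X}

theorem sUnion_of_isPreconnected {𝒞 : Set (Set X)} (hK : IsCompact K) (hK𝒞 : K ⊆ ⋃₀ 𝒞)
    (h𝒞 : ∀ C ∈ 𝒞, IsPreconnected C ∧ (C ∩ K).Nonempty) : HasCompactTransversal (⋃₀ 𝒞) := by
  refine ⟨K, hK𝒞, hK, fun x ⟨C, hC, hx⟩ ↦ (h𝒞 C hC).2.mono ?_⟩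
  gcongr
  exact (h𝒞 C hC).1.subset_connectedComponentIn hx (subset_sUnion_of_mem hC)

theorem of_isPreconnected (hS : IsPreconnected S) : HasCompactTransversal S := by
  obtain rfl | ⟨x, hx⟩ := S.eq_empty_or_nonempty
  · exact ⟨∅, Subset.rfl, isCompact_empty, by simp⟩
  · rw [← sUnion_singleton S]
    refine sUnion_of_isPreconnected (isCompact_singleton (x := x)) (by simpa) ?_
    simpa using ⟨hS, hx⟩

theorem union (h₁ : HasCompactTransversal S₁) (h₂ : HasCompactTransversal S₂) :
    HasCompactTransversal (S₁ ∪ S₂) := by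
  obtain ⟨K₁, hKS₁, hK₁, hmeet₁⟩ := h₁
  obtain ⟨K₂, hKS₂, hK₂, hmeet₂⟩ := h₂
  refine ⟨K₁ ∪ K₂, union_subset_union hKS₁ hKS₂, hK₁.union hK₂, ?_⟩
  rintro x (hx | hx)
  · exact (hmeet₁ x hx).mono <| inter_subset_inter
      (connectedComponentIn_mono x subset_union_left) subset_union_left
  · exact (hmeet₂ x hx).mono <| inter_subset_inter
      (connectedComponentIn_mono x subset_union_right) subset_union_right

theorem countable_locallyConstant [R1Space X] [SecondCountableTopology X] [Countable Z]
    (hS : HasCompactTransversal S) : Countable (LocallyConstant S Z) := by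
  obtain ⟨K, hKS, hK, hmeet⟩ := hS
  have : CompactSpace K := isCompact_iff_compactSpace.1 hK
  have : Countable (LocallyConstant K Z) := countable_locallyConstant_of_compactSpace
  let restrict : LocallyConstant S Z → LocallyConstant K Z :=
    LocallyConstant.comap ⟨inclusion hKS, continuous_inclusion hKS⟩
  suffices restrict.Injective from this.countable
  intro f g hfg
  ext x
  obtain ⟨y, hy, hyK⟩ := hmeet x x.2
  rw [connectedComponentIn_eq_image x.2] at hy
  obtain ⟨y, hxy, rfl⟩ := hy
  have eq_on_component (h : LocallyConstant S Z) : h x = h y :=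
    h.isLocallyConstant.apply_eq_of_isPreconnected isPreconnected_connectedComponent
      mem_connectedComponent hxy
  calc f x = f y := eq_on_component f
    _ = g y := LocallyConstant.congr_fun hfg ⟨y, hyK⟩
    _ = g x := (eq_on_component g).symm

end HasCompactTransversal

end CompactTransversal

/-- The topologist's sine curve `y = sin (1 / x)`, parametrized by `t = 1 / x`. -/
noncomputable def sineCurve (t : ℝ) : ℝ × ℝ := (1 / t, sin t)

theorem isPreconnected_image_sineCurve {I : Set ℝ} (hI : I.OrdConnected) (hpos : I ⊆ Ioi 0) :
    IsPreconnected (sineCurve '' I) :=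
  hI.isPreconnected.image _ <|
    (continuousOn_const.div continuousOn_id fun _ ht ↦ (hpos ht).ne').prodMk
      continuous_sin.continuousOn

theorem T_eq_image_union_segment : T = sineCurve '' Ici 1 ∪ {0} ×ˢ Ico (-1) 0 := by
  ext ⟨x, y⟩
  refine or_congr ⟨fun ⟨hx, hx1, hy⟩ ↦ ?_, ?_⟩ Iff.rfl
  · exact ⟨1 / x, (one_le_div hx).2 hx1, Prod.ext (one_div_one_div x) hy.symm⟩
  · rintro ⟨t, ht : 1 ≤ t, ⟨⟩⟩
    have ht0 : 0 < t := one_pos.trans_le ht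
    exact ⟨one_div_pos.2 ht0, (div_le_one ht0).2 ht, by rw [one_div_one_div]⟩

theorem T_inter_fst_gt_eq_image {a : ℝ} (ha : 0 ≤ a) :
    T ∩ {q | q.1 > a} = sineCurve '' {t | 1 ≤ t ∧ a < 1 / t} := by
  rw [T_eq_image_union_segment]
  ext q
  constructor
  · rintro ⟨⟨t, ht, rfl⟩ | ⟨hq, -⟩, hqa⟩
    · exact ⟨t, ⟨ht, hqa⟩, rfl⟩
    · exact absurd hqa (not_lt.2 (le_of_eq_of_le hq ha))
  · rintro ⟨t, ⟨ht, hta⟩, rfl⟩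
    exact ⟨Or.inl ⟨t, ht, rfl⟩, hta⟩

theorem isPreconnected_T_inter_fst_gt {a : ℝ} (ha : 0 ≤ a) :
    IsPreconnected (T ∩ {q | q.1 > a}) := by
  rw [T_inter_fst_gt_eq_image ha]
  refine isPreconnected_image_sineCurve ⟨fun t ht u hu v hv ↦ ?_⟩ fun t ht ↦ one_pos.trans_le ht.1
  have hv1 : 1 ≤ v := ht.1.trans hv.1
  exact ⟨hv1, hu.2.trans_le (one_div_le_one_div_of_le (one_pos.trans_le hv1) hv.2)⟩

/-- The `k`-th open interval of positive reals on which the sine is negative, counting from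
`k = 0`. -/
def sinNegInterval (k : ℕ) : Set ℝ := Ioo (k * (2 * π) + π) (k * (2 * π) + 2 * π)

theorem sin_neg_of_mem_sinNegInterval {k : ℕ} {t : ℝ} (ht : t ∈ sinNegInterval k) :
    sin t < 0 := by
  rw [← sin_sub_nat_mul_two_pi t k, ← sin_sub_two_pi]
  exact sin_neg_of_neg_of_neg_pi_lt (by linarith [ht.2]) (by linarith [ht.1])

theorem exists_mem_sinNegInterval {t : ℝ} (ht : 0 ≤ t) (hsin : sin t < 0) :
    ∃ k, t ∈ sinNegInterval k := by
  have floor_le := Nat.floor_le (div_nonneg ht two_pi_pos.le)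
  have lt_floor := Nat.lt_floor_add_one (t / (2 * π))
  rw [le_div_iff₀ two_pi_pos] at floor_le
  rw [div_lt_iff₀ two_pi_pos] at lt_floor
  refine ⟨⌊t / (2 * π)⌋₊, ?_, by linarith⟩
  contrapose! hsin
  rw [← sin_sub_nat_mul_two_pi t ⌊t / (2 * π)⌋₊]
  exact sin_nonneg_of_nonneg_of_le_pi (by linarith) (by linarith)

theorem sinNegInterval_subset_Ici_one (k : ℕ) : sinNegInterval k ⊆ Ici 1 := fun t ht ↦ by
  have : 0 ≤ k * (2 * π) := by positivity
  exact mem_Ici.2 (by linarith [ht.1, pi_gt_three])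

theorem V_eq_sUnion :
    V = ⋃₀ insert ({0} ×ˢ Ico (-1) 0) (range fun k ↦ sineCurve '' sinNegInterval k) := by
  rw [sUnion_insert, sUnion_range, V, T_eq_image_union_segment,
    union_inter_distrib_right, union_comm]
  congr 1
  · exact inter_eq_left.2 fun q hq ↦ hq.2.2
  · ext q
    rw [mem_iUnion]
    constructor
    · rintro ⟨⟨t, ht, rfl⟩, hsin⟩
      obtain ⟨k, hk⟩ := exists_mem_sinNegInterval (zero_le_one.trans ht) hsin
      exact ⟨k, t, hk, rfl⟩
    · rintro ⟨k, t, ht, rfl⟩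
      exact ⟨⟨t, sinNegInterval_subset_Ici_one k ht, rfl⟩, sin_neg_of_mem_sinNegInterval ht⟩

/-- The parameter in `sinNegInterval k` at which the sine attains its minimum `-1`. -/
noncomputable def trough (k : ℕ) : ℝ := k * (2 * π) + (π + π / 2)

theorem trough_mem_sinNegInterval (k : ℕ) : trough k ∈ sinNegInterval k := by
  constructor <;> unfold trough <;> linarith [pi_pos]

theorem sin_trough (k : ℕ) : sin (trough k) = -1 := by
  rw [trough, add_comm, sin_add_nat_mul_two_pi, add_comm, sin_add_pi, sin_pi_div_two]

theorem tendsto_trough_atTop : Filter.Tendsto trough Filter.atTop Filter.atTop :=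
  Filter.tendsto_atTop_add_const_right _ _ <|
    tendsto_natCast_atTop_atTop.atTop_mul_const two_pi_pos

theorem tendsto_sineCurve_trough :
    Filter.Tendsto (fun k ↦ sineCurve (trough k)) Filter.atTop (nhds r) := by
  simp only [sineCurve, sin_trough, one_div]
  exact tendsto_trough_atTop.inv_tendsto_atTop.prodMk_nhds tendsto_const_nhds

theorem hasCompactTransversal_V : HasCompactTransversal V := by
  have r_mem_segment : r ∈ ({0} : Set ℝ) ×ˢ Ico (-1 : ℝ) 0 := by simp [r]
  have trough_mem_arc (k : ℕ) : sineCurve (trough k) ∈ sineCurve '' sinNegInterval k :=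
    mem_image_of_mem _ (trough_mem_sinNegInterval k)
  rw [V_eq_sUnion]
  refine .sUnion_of_isPreconnected tendsto_sineCurve_trough.isCompact_insert_range ?_ ?_
  · refine insert_subset ⟨_, mem_insert _ _, r_mem_segment⟩ (range_subset_iff.2 fun k ↦ ?_)
    exact ⟨_, mem_insert_of_mem _ (mem_range_self k), trough_mem_arc k⟩
  · refine forall_mem_insert.2 ⟨?_, forall_mem_range.2 fun k ↦ ?_⟩
    · exact ⟨isPreconnected_singleton.prod isPreconnected_Ico,
        r, r_mem_segment, mem_insert _ _⟩
    · exact ⟨isPreconnected_image_sineCurve ordConnected_Ioo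
          ((sinNegInterval_subset_Ici_one k).trans (Ici_subset_Ioi.2 one_pos)),
        _, trough_mem_arc k, mem_insert_of_mem _ (mem_range_self k)⟩

theorem stmt_8_general {Z : Type*} [Countable Z] {C : Set (ℝ × ℝ)} (hC : IsPreconnected C) :
    Countable (LocallyConstant ↥(V ∪ C) Z) :=
  (hasCompactTransversal_V.union (.of_isPreconnected hC)).countable_locallyConstant

/-- For a prime `p` and every `i ≥ 1`, the locally constant functions `Vi i → ZMod p`
form a countable set. -/
theorem stmt_8 (p : ℕ) (hp : p.Prime) : ∀ i : ℕ, 1 ≤ i →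
    Countable (LocallyConstant (Vi i) (ZMod p)) := by
  have : NeZero p := ⟨hp.ne_zero⟩
  exact fun i _ ↦ stmt_8_general (isPreconnected_T_inter_fst_gt (by positivity))
end
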